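/- Let (X_i)_{i≥1} be i.i.d. standard normal and X_{(n)} = max_{1≤i≤n} X_i. Let a_n = √(2 log n), c_n = log(√(4π log n)), b_n = a_n - c_n/a_n - (c_n² - 2c_n)/(2a_n³), and Y_n = a_n(X_{(n)} - b_n). Then, as n → ∞, W₁(L(Y_n), Λ) = ((γ - 2 Ei(-1)) log log n/(4 log n))(1 + o(1)), where γ is the Euler–Mascheroni constant and Ei is the exponential integral function. -/

import Mathlib

open MeasureTheory Filter Real

/-- The standard normal cumulative distribution function. -/
noncomputable def stdNormalCDF (x : ℝ) : ℝ :=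
  ∫ t in Set.Iic x, Real.exp (-t ^ 2 / 2) / Real.sqrt (2 * Real.pi)

/-- The standard normal density. -/
noncomputable def stdNormalPDF (x : ℝ) : ℝ :=
  Real.exp (-x ^ 2 / 2) / Real.sqrt (2 * Real.pi)

/-- Scaling constant `a_n = √(2 log n)`. -/
noncomputable def aSeq (n : ℕ) : ℝ := Real.sqrt (2 * Real.log n)

/-- Centering constant
`b_n = √(2 log n) - (log log n + log (4π)) / (2 √(2 log n))`. -/
noncomputable def bSeq (n : ℕ) : ℝ :=
  aSeq n - (Real.log (Real.log n) + Real.log (4 * Real.pi)) / (2 * aSeq n)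

/-- `c_n = log (√(4 π log n))`. -/
noncomputable def cSeq (n : ℕ) : ℝ := Real.log (Real.sqrt (4 * Real.pi * Real.log n))

/-- The CDF of `Y_n = a_n (X_{(n)} - b_n)` where `X_{(n)}` is the maximum of `n`
i.i.d. standard normal random variables: `P(Y_n ≤ x) = Φ(b_n + x/a_n)^n`. -/
noncomputable def Fmax (n : ℕ) (x : ℝ) : ℝ := stdNormalCDF (bSeq n + x / aSeq n) ^ n

/-- The density of `Y_n = a_n (X_{(n)} - b_n)`:
`f_n(x) = n a_n⁻¹ φ(b_n + x/a_n) Φ(b_n + x/a_n)^{n-1}`. -/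
noncomputable def fmax (n : ℕ) (x : ℝ) : ℝ :=
  n * (aSeq n)⁻¹ * stdNormalPDF (bSeq n + x / aSeq n) *
    stdNormalCDF (bSeq n + x / aSeq n) ^ (n - 1)

/-- The density of the standard Gumbel distribution. -/
noncomputable def gumbelPDF (x : ℝ) : ℝ := Real.exp (-x - Real.exp (-x))

/-- Refined centering `b_n = a_n - c_n/a_n - (c_n² - 2c_n)/(2a_n³)`. -/
noncomputable def bSeq3 (n : ℕ) : ℝ :=
  aSeq n - cSeq n / aSeq n - ((cSeq n) ^ 2 - 2 * cSeq n) / (2 * (aSeq n) ^ 3)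

/-- The value `Ei(-1) = -∫_1^∞ e^{-t}/t dt` of the exponential integral. -/
noncomputable def EiNegOne : ℝ := -∫ t in Set.Ioi (1 : ℝ), Real.exp (-t) / t


lemma phi_integrable : Integrable (fun t : ℝ => Real.exp (-t ^ 2 / 2) / Real.sqrt (2 * Real.pi)) := by
  have h := (integrable_exp_neg_mul_sq (b := 1/2) (by norm_num)).div_const (Real.sqrt (2 * Real.pi))
  refine h.congr (Eventually.of_forall fun t => ?_)
  simp only
  congr 2; ring

lemma phi_integral : ∫ t : ℝ, Real.exp (-t ^ 2 / 2) / Real.sqrt (2 * Real.pi) = 1 := by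
  have h := integral_gaussian (1/2)
  have h2 : (fun t : ℝ => Real.exp (-t ^ 2 / 2)) = fun t => Real.exp (-(1/2) * t^2) := by
    funext t; congr 1; ring
  rw [integral_div, h2, h, show π / (1/2) = 2 * π by ring]
  exact div_self (by positivity)

lemma phi_cont : Continuous (fun t : ℝ => Real.exp (-t ^ 2 / 2) / Real.sqrt (2 * Real.pi)) := by
  fun_prop

lemma cdf_hasDeriv (x : ℝ) : HasDerivAt stdNormalCDF (stdNormalPDF x) x := by
  have key : stdNormalCDF = fun u => stdNormalCDF 0 +
      ∫ t in (0:ℝ)..u, Real.exp (-t ^ 2 / 2) / Real.sqrt (2 * Real.pi) := by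
    funext u
    have := intervalIntegral.integral_Iic_sub_Iic (a := 0) (b := u)
      phi_integrable.integrableOn phi_integrable.integrableOn
    rw [← this]; unfold stdNormalCDF; ring
  rw [key]
  refine HasDerivAt.const_add _ ?_
  exact intervalIntegral.integral_hasDerivAt_right (phi_integrable.intervalIntegrable)
    (phi_cont.stronglyMeasurableAtFilter _ _) phi_cont.continuousAt

lemma cdf_cont : Continuous stdNormalCDF :=
  continuous_iff_continuousAt.2 fun x => (cdf_hasDeriv x).continuousAt

lemma pdf_pos (x : ℝ) : 0 < stdNormalPDF x := by unfold stdNormalPDF; positivity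

lemma cdf_mono : Monotone stdNormalCDF :=
  monotone_of_hasDerivAt_nonneg cdf_hasDeriv (fun x => (pdf_pos x).le)

lemma cdf_nonneg' (x : ℝ) : 0 ≤ stdNormalCDF x :=
  integral_nonneg fun t => by positivity

lemma cdf_tendsto : Tendsto stdNormalCDF atTop (nhds 1) := by
  have := (aecover_Iic (μ := (volume : Measure ℝ)) tendsto_id).integral_tendsto_of_countably_generated
    phi_integrable
  rw [phi_integral] at this
  exact this

lemma cdf_le_one' (x : ℝ) : stdNormalCDF x ≤ 1 :=
  cdf_mono.ge_of_tendsto cdf_tendsto x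

lemma cdf_neg (t : ℝ) : stdNormalCDF (-t) = 1 - stdNormalCDF t := by
  have h := intervalIntegral.integral_Iic_add_Ioi (b := t) phi_integrable.integrableOn
    phi_integrable.integrableOn
  rw [phi_integral] at h
  have h2 := integral_comp_neg_Iic (-t) (fun t : ℝ => Real.exp (-t ^ 2 / 2) / Real.sqrt (2 * Real.pi))
  simp only [neg_neg, neg_sq] at h2
  unfold stdNormalCDF
  rw [h2]; linarith

lemma pdf_hasDeriv (x : ℝ) : HasDerivAt stdNormalPDF (-x * stdNormalPDF x) x := by
  unfold stdNormalPDF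
  have h : HasDerivAt (fun x : ℝ => -x ^ 2 / 2) (-x) x := by
    have := ((hasDerivAt_pow 2 x).neg).div_const 2
    convert! this using 1
    simp; ring
  convert! (h.exp).div_const (Real.sqrt (2 * Real.pi)) using 1
  ring

lemma pdf_le_one (x : ℝ) : stdNormalPDF x ≤ 1 := by
  unfold stdNormalPDF
  have h1 : Real.exp (-x ^ 2 / 2) ≤ 1 := by
    rw [Real.exp_le_one_iff]; nlinarith [sq_nonneg x]
  have h2 : 1 ≤ Real.sqrt (2 * Real.pi) := by
    rw [Real.one_le_sqrt]; nlinarith [Real.pi_gt_three]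
  rw [div_le_one (by positivity)]; linarith

lemma pdf_div_tendsto : Tendsto (fun x => stdNormalPDF x / x) atTop (nhds 0) := by
  refine squeeze_zero' (g := fun x => x⁻¹) ?_ ?_ tendsto_inv_atTop_zero
  · filter_upwards [eventually_gt_atTop 0] with x hx
    have := pdf_pos x; positivity
  · filter_upwards [eventually_gt_atTop 0] with x hx
    rw [div_eq_mul_inv]
    have := pdf_le_one x
    have : 0 < x⁻¹ := by positivity
    nlinarith

lemma pdf_div_hasDeriv {x : ℝ} (hx : x ≠ 0) :
    HasDerivAt (fun x => stdNormalPDF x / x) (-stdNormalPDF x - stdNormalPDF x / x^2) x := by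
  convert! (pdf_hasDeriv x).div (hasDerivAt_id x) hx using 1
  simp; field_simp

lemma pdf_div3_hasDeriv {x : ℝ} (hx : x ≠ 0) :
    HasDerivAt (fun x => stdNormalPDF x / x^3)
      (-stdNormalPDF x / x^2 - 3 * stdNormalPDF x / x^4) x := by
  convert! (pdf_hasDeriv x).div (hasDerivAt_pow 3 x) (pow_ne_zero 3 hx) using 1
  simp; field_simp

lemma mills_upper {u : ℝ} (hu : 0 < u) : 1 - stdNormalCDF u ≤ stdNormalPDF u / u := by
  have hd : ∀ x ∈ Set.Ioi (0:ℝ), HasDerivAt (fun x => stdNormalCDF x + stdNormalPDF x / x)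
      (- (stdNormalPDF x / x^2)) x := by
    intro x hx
    convert! (cdf_hasDeriv x).add (pdf_div_hasDeriv (ne_of_gt hx)) using 1
    ring
  have hanti : AntitoneOn (fun x => stdNormalCDF x + stdNormalPDF x / x) (Set.Ioi 0) := by
    refine antitoneOn_of_deriv_nonpos (convex_Ioi 0)
      (fun x hx => (hd x hx).continuousAt.continuousWithinAt) ?_ ?_
    · intro x hx; rw [interior_Ioi] at hx
      exact (hd x hx).differentiableAt.differentiableWithinAt
    · intro x hx; rw [interior_Ioi] at hx
      rw [(hd x hx).deriv]
      have := pdf_pos x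
      have : 0 ≤ stdNormalPDF x / x^2 := by positivity
      linarith
  have hl : Tendsto (fun x => stdNormalCDF x + stdNormalPDF x / x) atTop (nhds 1) := by
    simpa using cdf_tendsto.add pdf_div_tendsto
  have : (1:ℝ) ≤ stdNormalCDF u + stdNormalPDF u / u := by
    refine le_of_tendsto hl ?_
    filter_upwards [eventually_ge_atTop u] with v hv
    exact hanti hu (lt_of_lt_of_le hu hv) hv
  linarith

lemma mills_lower {u : ℝ} (hu : 0 < u) :
    stdNormalPDF u / u * (1 - 1 / u^2) ≤ 1 - stdNormalCDF u := by
  have hd : ∀ x ∈ Set.Ioi (0:ℝ), HasDerivAt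
      (fun x => stdNormalCDF x + (stdNormalPDF x / x - stdNormalPDF x / x^3))
      (3 * stdNormalPDF x / x^4) x := by
    intro x hx
    convert! (cdf_hasDeriv x).add ((pdf_div_hasDeriv (ne_of_gt hx)).sub
      (pdf_div3_hasDeriv (ne_of_gt hx))) using 1
    ring
  have hmono : MonotoneOn
      (fun x => stdNormalCDF x + (stdNormalPDF x / x - stdNormalPDF x / x^3)) (Set.Ioi 0) := by
    refine monotoneOn_of_deriv_nonneg (convex_Ioi 0)
      (fun x hx => (hd x hx).continuousAt.continuousWithinAt) ?_ ?_
    · intro x hx; rw [interior_Ioi] at hx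
      exact (hd x hx).differentiableAt.differentiableWithinAt
    · intro x hx; rw [interior_Ioi] at hx
      rw [(hd x hx).deriv]
      have := pdf_pos x
      positivity
  have hl3 : Tendsto (fun x => stdNormalPDF x / x^3) atTop (nhds 0) := by
    have := pdf_div_tendsto.mul ((tendsto_inv_atTop_zero (𝕜 := ℝ)).pow 2)
    simp only [ne_eq, OfNat.ofNat_ne_zero, not_false_eq_true, zero_pow, mul_zero] at this
    refine this.congr' ?_
    filter_upwards [eventually_gt_atTop 0] with x hx
    field_simp
  have hl : Tendsto (fun x => stdNormalCDF x + (stdNormalPDF x / x - stdNormalPDF x / x^3))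
      atTop (nhds 1) := by
    simpa using cdf_tendsto.add (pdf_div_tendsto.sub hl3)
  have : stdNormalCDF u + (stdNormalPDF u / u - stdNormalPDF u / u^3) ≤ 1 := by
    refine ge_of_tendsto hl ?_
    filter_upwards [eventually_ge_atTop u] with v hv
    exact hmono hu (lt_of_lt_of_le hu hv) hv
  have e : stdNormalPDF u / u * (1 - 1 / u^2) = stdNormalPDF u / u - stdNormalPDF u / u^3 := by
    field_simp
  linarith

/-- Poissonization: `(1-q)^n` versus `exp (-nq)`. -/
lemma poisson_le {q : ℝ} (hq1 : q ≤ 1) (n : ℕ) : (1 - q)^n ≤ Real.exp (-(n * q)) := by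
  have : 1 - q ≤ Real.exp (-q) := by have := Real.add_one_le_exp (-q); linarith
  calc (1-q)^n ≤ (Real.exp (-q))^n := pow_le_pow_left₀ (by linarith) this n
    _ = _ := by rw [← Real.exp_nat_mul]; congr 1; ring

lemma poisson_ge {q : ℝ} (hq0 : 0 ≤ q) (hq1 : q ≤ 1) (n : ℕ) :
    Real.exp (-(n * q)) * (1 - n * q^2) ≤ (1 - q)^n := by
  have h1 : 1 - q^2 ≤ (1-q) * Real.exp q := by
    have := Real.add_one_le_exp q
    nlinarith
  have h2 : 1 - n * q^2 ≤ (1 - q^2)^n := by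
    have := one_add_mul_le_pow (a := -q^2) (by nlinarith) n
    calc _ = 1 + n * (-q^2) := by ring
      _ ≤ _ := this
      _ = _ := by ring
  have h3 : (1-q^2)^n ≤ ((1-q) * Real.exp q)^n := pow_le_pow_left₀ (by nlinarith) h1 n
  have h4 : Real.exp (-(n * q)) * ((1-q) * Real.exp q)^n = (1-q)^n := by
    rw [mul_pow, ← Real.exp_nat_mul, mul_left_comm, ← Real.exp_add]
    simp
  rw [← h4]
  exact mul_le_mul_of_nonneg_left (h2.trans h3) (Real.exp_pos _).le

lemma exp_diff {p y m : ℝ} (hp : m ≤ p) (hy : m ≤ y) :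
    |Real.exp (-p) - Real.exp (-y)| ≤ |p - y| * Real.exp (-m) := by
  wlog h : p ≤ y generalizing p y
  · rw [abs_sub_comm, abs_sub_comm p]; exact this hy hp (by linarith)
  have h1 : Real.exp (-y) ≤ Real.exp (-p) := by gcongr
  rw [abs_of_nonneg (by linarith), abs_of_nonpos (by linarith)]
  have h2 : Real.exp (-y) = Real.exp (-p) * Real.exp (p - y) := by rw [← Real.exp_add]; congr 1; ring
  have h3 := Real.add_one_le_exp (p - y)
  have h4 : Real.exp (-p) ≤ Real.exp (-m) := by gcongr
  have h5 := Real.exp_pos (-p)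
  rw [h2]
  nlinarith

lemma ei_integrable : IntegrableOn (fun t : ℝ => Real.exp (-t) / t) (Set.Ioi 1) := by
  have h : IntegrableOn (fun t : ℝ => Real.exp (-t)) (Set.Ioi 1) := integrableOn_exp_neg_Ioi 1
  refine Integrable.mono' h ?_ ?_
  · refine ContinuousOn.aestronglyMeasurable ?_ measurableSet_Ioi
    intro t ht
    have : t ≠ 0 := by have : 1 < t := ht; linarith
    exact ContinuousAt.continuousWithinAt (by fun_prop (disch := assumption))
  · refine (ae_restrict_iff' measurableSet_Ioi).2 (Eventually.of_forall fun t ht => ?_)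
    have ht : 1 < t := ht
    rw [Real.norm_of_nonneg (by positivity)]
    exact div_le_self (Real.exp_pos _).le ht.le

lemma log_exp_complex :
    (∫ t in Set.Ioi (0:ℝ), Real.log t * Real.exp (-t)) = -Real.eulerMascheroniConstant := by
  have h1 := Complex.hasDerivAt_GammaIntegral (s := 1) (by simp)
  have h2 : HasDerivAt Complex.Gamma
      (∫ t : ℝ in Set.Ioi 0, (t:ℂ) ^ ((1:ℂ) - 1) * (Real.log t * Real.exp (-t))) 1 := by
    refine h1.congr_of_eventuallyEq ?_
    have : {s : ℂ | 0 < s.re} ∈ nhds (1:ℂ) :=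
      (isOpen_lt continuous_const Complex.continuous_re).mem_nhds (by simp)
    filter_upwards [this] with s hs
    exact Complex.Gamma_eq_integral hs
  have h3 := h2.unique Complex.hasDerivAt_Gamma_one
  have h4 : (∫ t : ℝ in Set.Ioi 0, (t:ℂ) ^ ((1:ℂ) - 1) * (Real.log t * Real.exp (-t))) =
      ((∫ t in Set.Ioi (0:ℝ), Real.log t * Real.exp (-t) : ℝ) : ℂ) := by
    rw [← integral_complex_ofReal]
    congr 1
    funext t
    simp
  rw [h4] at h3
  exact_mod_cast h3

lemma log_exp_integrable :
    IntegrableOn (fun t : ℝ => Real.log t * Real.exp (-t)) (Set.Ioi 0) := by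
  by_contra hcon
  have h1 := log_exp_complex
  rw [integral_undef hcon] at h1
  have := Real.one_half_lt_eulerMascheroniConstant
  linarith

lemma log_exp_Ioi_one : (∫ t in Set.Ioi (1:ℝ), Real.log t * Real.exp (-t)) = -EiNegOne := by
  have hi : IntegrableOn (fun t : ℝ => Real.log t * Real.exp (-t)) (Set.Ioi 1) :=
    log_exp_integrable.mono_set (Set.Ioi_subset_Ioi zero_le_one)
  have hd : ∀ t ∈ Set.Ici (1:ℝ), HasDerivAt (fun t : ℝ => -(Real.log t * Real.exp (-t)))
      (Real.log t * Real.exp (-t) - Real.exp (-t) / t) t := by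
    intro t ht
    have ht : (1:ℝ) ≤ t := ht
    have h1 := (Real.hasDerivAt_log (by linarith : t ≠ 0)).mul ((hasDerivAt_neg t).exp)
    refine h1.neg.congr_deriv ?_
    ring
  have hl : Tendsto (fun t : ℝ => -(Real.log t * Real.exp (-t))) atTop (nhds 0) := by
    have h1 : Tendsto (fun t : ℝ => t * Real.exp (-t)) atTop (nhds 0) := by
      simpa using Real.tendsto_pow_mul_exp_neg_atTop_nhds_zero 1
    have h2 : Tendsto (fun t : ℝ => Real.log t * Real.exp (-t)) atTop (nhds 0) := by
      refine squeeze_zero' ?_ ?_ h1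
      · filter_upwards [eventually_ge_atTop 1] with t ht
        exact mul_nonneg (Real.log_nonneg ht) (Real.exp_pos _).le
      · filter_upwards [eventually_ge_atTop 1] with t ht
        apply mul_le_mul_of_nonneg_right _ (Real.exp_pos _).le
        exact Real.log_le_self (by linarith)
    simpa using h2.neg
  have h := integral_Ioi_of_hasDerivAt_of_tendsto' hd (hi.sub ei_integrable) hl
  rw [integral_sub hi ei_integrable] at h
  simp only [Real.log_one, zero_mul, neg_zero, sub_zero] at h
  unfold EiNegOne
  linarith

lemma abs_log_integral : (∫ t in Set.Ioi (0:ℝ), |Real.log t| * Real.exp (-t)) =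
    Real.eulerMascheroniConstant - 2 * EiNegOne := by
  have h1 : ∀ t ∈ Set.Ioi (0:ℝ), |Real.log t| * Real.exp (-t) = -(Real.log t * Real.exp (-t)) +
      2 * (Set.Ioi (1:ℝ)).indicator (fun t => Real.log t * Real.exp (-t)) t := by
    intro t ht
    have ht : 0 < t := ht
    by_cases h : 1 < t
    · rw [Set.indicator_of_mem (by exact h), abs_of_pos (Real.log_pos h)]; ring
    · rw [Set.indicator_of_notMem (by simpa using h), abs_of_nonpos (Real.log_nonpos ht.le (by linarith))]
      ring
  rw [setIntegral_congr_fun measurableSet_Ioi h1, integral_add (f := fun t => -(Real.log t * Real.exp (-t))) log_exp_integrable.neg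
    ((log_exp_integrable.integrable.indicator measurableSet_Ioi).const_mul 2), integral_neg,
    integral_const_mul, setIntegral_indicator measurableSet_Ioi, log_exp_complex,
    Set.Ioi_inter_Ioi, show max (0:ℝ) 1 = 1 by norm_num, log_exp_Ioi_one]
  ring

lemma gumbel_integral : (∫ x : ℝ, |x| * (Real.exp (-x) * Real.exp (-Real.exp (-x)))) =
    Real.eulerMascheroniConstant - 2 * EiNegOne := by
  have hd : ∀ x ∈ (Set.univ : Set ℝ), HasDerivWithinAt (fun x : ℝ => Real.exp (-x))
      (-Real.exp (-x)) Set.univ x := by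
    intro x _
    refine HasDerivAt.hasDerivWithinAt ?_
    exact ((hasDerivAt_neg x).exp).congr_deriv (by ring)
  have hinj : Set.InjOn (fun x : ℝ => Real.exp (-x)) Set.univ := by
    intro x _ y _ h
    simpa using h
  have h := integral_image_eq_integral_abs_deriv_smul MeasurableSet.univ hd hinj
    (fun t => |Real.log t| * Real.exp (-t))
  have himg : (fun x : ℝ => Real.exp (-x)) '' Set.univ = Set.Ioi 0 := by
    ext t
    simp only [Set.image_univ, Set.mem_range, Set.mem_Ioi]
    constructor
    · rintro ⟨x, rfl⟩; exact Real.exp_pos _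
    · intro ht; exact ⟨-Real.log t, by rw [neg_neg, Real.exp_log ht]⟩
  rw [himg, abs_log_integral] at h
  rw [h, setIntegral_univ]
  congr 1
  funext x
  simp only [Real.log_exp, abs_neg, smul_eq_mul, abs_of_pos (Real.exp_pos (-x))]
  ring

lemma const_pos : 0 < Real.eulerMascheroniConstant - 2 * EiNegOne := by
  have h1 := Real.one_half_lt_eulerMascheroniConstant
  have h2 : 0 ≤ ∫ t in Set.Ioi (1 : ℝ), Real.exp (-t) / t := by
    refine setIntegral_nonneg measurableSet_Ioi fun t ht => ?_
    have ht : 1 < t := ht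
    positivity
  unfold EiNegOne
  linarith

lemma exp_abs_integrable : Integrable (fun x : ℝ => Real.exp (-|x|/2)) := by
  rw [← integrableOn_univ, ← Set.Iic_union_Ioi (a := (0:ℝ)), integrableOn_union]
  constructor
  · refine (integrableOn_exp_mul_Iic (a := 1/2) (by norm_num) 0).congr_fun ?_ measurableSet_Iic
    intro x hx
    have hx : x ≤ 0 := hx
    simp only
    rw [abs_of_nonpos hx]; congr 1; ring
  · refine (integrableOn_exp_mul_Ioi (a := -(1/2)) (by norm_num) 0).congr_fun ?_ measurableSet_Ioi
    intro x hx
    have hx : 0 < x := hx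
    simp only
    rw [abs_of_pos hx]; congr 1; ring

/-- Working hypotheses relating `n`, `a_n`, `c_n`, `ε = 1 / a_n²`. -/
structure NHyp (n : ℕ) (a c e : ℝ) : Prop where
  ha : 0 < a
  hn : (n : ℝ) = Real.exp (a^2/2)
  hc : Real.exp c = Real.sqrt (2 * Real.pi) * a
  c2 : 2 ≤ c
  he : e = 1 / a^2
  hce : c^2 * e ≤ 1/16

/-- The correction `d = (c² - 2c)/2`. -/
noncomputable def dd (c : ℝ) : ℝ := (c^2 - 2*c)/2

/-- shifted variable -/
noncomputable def ss (c e x : ℝ) : ℝ := x - c - dd c * e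

/-- exponent error -/
noncomputable def EE (c e x : ℝ) : ℝ := e * ((ss c e x)^2 / 2 - dd c)

/-- main multiplicative factor -/
noncomputable def MM (c e x : ℝ) : ℝ := Real.exp (-(EE c e x)) / (1 + ss c e x * e)

/-- the centering -/
noncomputable def bb (a c : ℝ) : ℝ := a - c / a - (c^2 - 2*c) / (2 * a^3)

/-- the mean number of exceedances -/
noncomputable def pp (n : ℕ) (a c x : ℝ) : ℝ := n * (1 - stdNormalCDF (bb a c + x / a))

namespace NHyp
variable {n : ℕ} {a c e : ℝ}

lemma epos (h : NHyp n a c e) : 0 < e := by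
  have := h.ha; rw [h.he]; positivity

lemma ae (h : NHyp n a c e) : a^2 * e = 1 := by
  have := h.ha; rw [h.he]; field_simp

lemma ce (h : NHyp n a c e) : c * e ≤ 1/32 := by
  have := h.epos; have := h.c2; have := h.hce; nlinarith [mul_pos h.epos (by linarith : 0 < c)]

lemma ele (h : NHyp n a c e) : e ≤ 1/64 := by
  have := h.epos; have := h.c2; have := h.ce; nlinarith

lemma d0 (h : NHyp n a c e) : 0 ≤ dd c := by
  have := h.c2; unfold dd; nlinarith

lemma de0 (h : NHyp n a c e) : 0 ≤ dd c * e := mul_nonneg h.d0 h.epos.le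

lemma de (h : NHyp n a c e) : dd c * e ≤ 1/32 := by
  have := h.c2; have := h.hce; have := h.epos; unfold dd; nlinarith

lemma a64 (h : NHyp n a c e) : 64 ≤ a^2 := by
  have := h.ae; have := h.ele; have := h.epos; nlinarith [sq_nonneg a]

lemma nge (h : NHyp n a c e) : a^2/2 ≤ n := by
  rw [h.hn]; have := Real.add_one_le_exp (a^2/2); linarith

lemma npos (h : NHyp n a c e) : (0:ℝ) < n := by
  rw [h.hn]; positivity

lemma ninv (h : NHyp n a c e) : 1 / (n:ℝ) ≤ c * e := by
  have h1 := h.nge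
  have h2 := h.ae
  have h3 := h.c2
  have h4 := h.epos
  have h5 := h.a64
  rw [div_le_iff₀ h.npos]
  have : 2 * e * (a^2/2) ≤ c * e * n := by
    apply mul_le_mul _ h1 (by linarith) (by positivity)
    nlinarith
  nlinarith

lemma u_eq (h : NHyp n a c e) (x : ℝ) : bb a c + x / a = a * (1 + ss c e x * e) := by
  have := h.ha
  unfold bb ss dd
  rw [h.he]
  field_simp
  ring

lemma main_eq (h : NHyp n a c e) (x : ℝ) (hs : 0 < 1 + ss c e x * e) :
    n * (stdNormalPDF (bb a c + x / a) / (bb a c + x / a)) = Real.exp (-x) * MM c e x := by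
  have ha := h.ha
  have hsq : 0 < Real.sqrt (2 * Real.pi) := by positivity
  rw [h.u_eq]
  set w := 1 + ss c e x * e with hw
  unfold MM stdNormalPDF
  rw [← hw, h.hn]
  have h1 : Real.exp (a^2/2) * Real.exp (-(a*w)^2/2) =
      Real.exp (-x) * Real.exp c * Real.exp (-(EE c e x)) := by
    rw [← Real.exp_add, ← Real.exp_add, ← Real.exp_add]
    congr 1
    have h2 := h.ae
    unfold EE
    have h3 : (a*w)^2 = a^2 + 2 * (a^2 * e) * ss c e x + (a^2*e) * e * (ss c e x)^2 := by
      rw [hw]; ring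
    rw [h3, h2]
    have : ss c e x = x - c - dd c * e := rfl
    linear_combination (-1) * this
  have h4 : Real.exp (a^2/2) * (Real.exp (-(a*w)^2/2) / Real.sqrt (2 * Real.pi) / (a * w)) =
    (Real.exp (a^2/2) * Real.exp (-(a*w)^2/2)) / (Real.sqrt (2 * Real.pi) * a * w) := by
    field_simp
  rw [h4, h1, h.hc]
  field_simp

lemma w_half (h : NHyp n a c e) {x : ℝ} (hx : -(1/4) ≤ x * e) : 1/2 ≤ 1 + ss c e x * e := by
  have h1 := h.ce
  have h2 := h.de
  have h3 := h.ele
  have h4 := h.epos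
  have h5 := h.de0
  have : ss c e x * e = x * e - c * e - dd c * e * e := by unfold ss; ring
  have : dd c * e * e ≤ 1/32 * 1 := by apply mul_le_mul h2 (by linarith) h4.le (by norm_num)
  linarith

lemma q0 (u : ℝ) : 0 ≤ 1 - stdNormalCDF u := by have := cdf_le_one' u; linarith
lemma q1 (u : ℝ) : 1 - stdNormalCDF u ≤ 1 := by have := cdf_nonneg' u; linarith

lemma MM_pos (h : NHyp n a c e) {x : ℝ} (hx : -(1/4) ≤ x * e) : 0 < MM c e x := by
  have := h.w_half hx
  unfold MM
  have : 0 < 1 + ss c e x * e := by linarith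
  positivity

lemma pp_le (h : NHyp n a c e) {x : ℝ} (hx : -(1/4) ≤ x * e) :
    pp n a c x ≤ Real.exp (-x) * MM c e x := by
  have hw := h.w_half hx
  rw [← h.main_eq x (by linarith)]
  unfold pp
  refine mul_le_mul_of_nonneg_left (mills_upper ?_) h.npos.le
  rw [h.u_eq]
  exact mul_pos h.ha (by linarith)

lemma le_pp (h : NHyp n a c e) {x : ℝ} (hx : -(1/4) ≤ x * e) :
    Real.exp (-x) * MM c e x * (1 - 4 * e) ≤ pp n a c x := by
  have hw := h.w_half hx
  have hu : 0 < bb a c + x / a := by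
    rw [h.u_eq]
    exact mul_pos h.ha (by linarith)
  rw [← h.main_eq x (by linarith)]
  unfold pp
  have hm := mills_lower hu
  have h1 : 1 / (bb a c + x / a)^2 ≤ 4 * e := by
    rw [div_le_iff₀ (by positivity), h.u_eq, mul_pow]
    have h2 := h.ae
    have : (1/4 : ℝ) ≤ (1 + ss c e x * e)^2 := by nlinarith
    calc (1:ℝ) ≤ 4 * (1 + ss c e x * e)^2 := by linarith
      _ = 4 * (a^2 * e) * (1 + ss c e x * e)^2 := by rw [h2]; ring
      _ = _ := by ring
  have h3 : stdNormalPDF (bb a c + x / a) / (bb a c + x / a) * (1 - 4 * e) ≤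
      stdNormalPDF (bb a c + x / a) / (bb a c + x / a) * (1 - 1 / (bb a c + x / a)^2) := by
    apply mul_le_mul_of_nonneg_left (by linarith)
    have := pdf_pos (bb a c + x / a)
    positivity
  calc _ = n * (stdNormalPDF (bb a c + x / a) / (bb a c + x / a) * (1 - 4 * e)) := by ring
    _ ≤ _ := mul_le_mul_of_nonneg_left (h3.trans hm) h.npos.le

lemma EE_ge (h : NHyp n a c e) (x : ℝ) : -(1/32) ≤ EE c e x := by
  have h1 := h.de
  have h2 := h.epos
  have : EE c e x = e * (ss c e x)^2/2 - dd c * e := by unfold EE; ring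
  have : 0 ≤ e * (ss c e x)^2 := by positivity
  linarith

lemma EE_eq (c e x : ℝ) : EE c e x =
    e * (x^2/2 - x*c + c - (x - c) * (dd c * e) + (dd c * e)^2/2) := by
  unfold EE ss
  have : dd c = (c^2 - 2*c)/2 := rfl
  linear_combination (-e) * this

lemma exp32 : Real.exp (1/32) ≤ 2 := by
  have h1 := Real.add_one_le_exp (-(1/32) : ℝ)
  have h2 : Real.exp (1/32) * Real.exp (-(1/32)) = 1 := by rw [← Real.exp_add]; simp
  have := Real.exp_pos (1/32)
  nlinarith

lemma ax (x : ℝ) : 2 * |x| ≤ 1 + x^2 := by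
  nlinarith [sq_abs x, sq_nonneg (|x| - 1)]

lemma EE_abs (h : NHyp n a c e) (x : ℝ) : |EE c e x| ≤ 5 * (c * e) * (1 + x^2) := by
  have h1 := h.de
  have h2 := h.de0
  have h3 := h.epos
  have h4 := h.c2
  rw [EE_eq, abs_mul, abs_of_pos h3]
  have hx := ax x
  have hx0 := abs_nonneg x
  set D := dd c * e
  have : |x^2/2 - x*c + c - (x - c) * D + D^2/2| ≤ 5 * c * (1 + x^2) := by
    have e1 : |x * c| = |x| * c := by rw [abs_mul, abs_of_nonneg (by linarith : 0 ≤ c)]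
    have e2 : |(x - c) * D| ≤ (|x| + c) * 1 := by
      rw [abs_mul, abs_of_nonneg h2]
      apply mul_le_mul _ (by linarith) h2 (by positivity)
      have := abs_sub x c
      rwa [abs_of_nonneg (by linarith : 0 ≤ c)] at this
    have e3 : D^2 ≤ 1 := by nlinarith
    have e4 := neg_abs_le (x*c)
    have e5 := le_abs_self (x*c)
    have e6 := neg_abs_le ((x-c)*D)
    have e7 := le_abs_self ((x-c)*D)
    have e8 : |x| * c ≤ c * (1 + x^2) := by nlinarith
    have e9 : x^2 ≤ c * x^2 := by nlinarith [sq_nonneg x]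
    have e10 : 0 ≤ D^2 := sq_nonneg D
    have e11 := sq_nonneg x
    rw [abs_le]
    constructor <;> nlinarith
  calc e * |x^2/2 - x*c + c - (x - c) * D + D^2/2| ≤ e * (5 * c * (1 + x^2)) :=
        mul_le_mul_of_nonneg_left this h3.le
    _ = _ := by ring

lemma ss_abs (h : NHyp n a c e) (x : ℝ) : |ss c e x| ≤ 3 * c * (1 + x^2) := by
  have h1 := h.de
  have h2 := h.de0
  have h4 := h.c2
  have hx := ax x
  have e1 := neg_abs_le x
  have e2 := le_abs_self x
  have : 0 ≤ c * x^2 := by positivity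
  have e9 : x^2 ≤ c * x^2 := by nlinarith [sq_nonneg x]
  unfold ss
  rw [abs_le]
  constructor <;> nlinarith

lemma MM_le (h : NHyp n a c e) {x : ℝ} (hx : -(1/4) ≤ x * e) : MM c e x ≤ 4 := by
  have hw := h.w_half hx
  unfold MM
  rw [div_le_iff₀ (by linarith)]
  have h1 := h.EE_ge x
  have : Real.exp (-(EE c e x)) ≤ Real.exp (1/32) := Real.exp_le_exp.2 (by linarith)
  have := exp32
  linarith

lemma MM_sub (h : NHyp n a c e) {x : ℝ} (hx : -(1/4) ≤ x * e) :
    |MM c e x - 1| ≤ 26 * (c * e) * (1 + x^2) := by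
  have hw := h.w_half hx
  have hE := h.EE_abs x
  have hs := h.ss_abs x
  have he := h.epos
  have h1 : |Real.exp (-(EE c e x)) - Real.exp (-0)| ≤ |EE c e x - 0| * Real.exp (-(-(1/32))) :=
    exp_diff (h.EE_ge x) (by norm_num)
  simp only [neg_zero, Real.exp_zero, sub_zero, neg_neg] at h1
  have h2 : |EE c e x| * Real.exp (1/32) ≤ |EE c e x| * 2 :=
    mul_le_mul_of_nonneg_left exp32 (abs_nonneg _)
  have h3 : MM c e x - 1 = (Real.exp (-(EE c e x)) - 1 - ss c e x * e) / (1 + ss c e x * e) := by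
    unfold MM
    have : 1 + ss c e x * e ≠ 0 := by linarith
    field_simp
    ring
  rw [h3, abs_div, abs_of_pos (by linarith : 0 < 1 + ss c e x * e), div_le_iff₀ (by linarith)]
  have h4 := abs_sub (Real.exp (-(EE c e x)) - 1) (ss c e x * e)
  rw [abs_mul (ss c e x), abs_of_pos he] at h4
  have h5 : |ss c e x| * e ≤ 3 * c * (1 + x^2) * e := mul_le_mul_of_nonneg_right hs he.le
  have h6 : 0 ≤ 26 * (c * e) * (1 + x^2) := by have := h.c2; positivity
  nlinarith

lemma pp_sub (h : NHyp n a c e) {x : ℝ} (hx : -(1/4) ≤ x * e) :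
    |pp n a c x - Real.exp (-x)| ≤ 34 * (c * e) * (1 + x^2) * Real.exp (-x) := by
  have h1 := h.pp_le hx
  have h2 := h.le_pp hx
  have h3 := h.MM_le hx
  have h4 := h.MM_sub hx
  have h5 := h.MM_pos hx
  have he := h.epos
  have hc := h.c2
  have hy := Real.exp_pos (-x)
  set y := Real.exp (-x)
  set M := MM c e x
  rw [abs_le] at h4
  have h6 : M * (4 * e) ≤ 8 * (c * e) * (1 + x^2) := by
    have : M * (4*e) ≤ 4 * (4 * e) := mul_le_mul_of_nonneg_right h3 (by positivity)
    have : 2 * e ≤ c * e := mul_le_mul_of_nonneg_right hc he.le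
    nlinarith [sq_nonneg x, mul_pos (by linarith : 0 < c) he,
      mul_nonneg (mul_pos (by linarith : 0 < c) he).le (sq_nonneg x)]
  have h7 : y * (M - 1) ≤ y * (26 * (c * e) * (1 + x^2)) := mul_le_mul_of_nonneg_left h4.2 hy.le
  have h8 : y * (-(26 * (c * e) * (1 + x^2))) ≤ y * (M - 1) := mul_le_mul_of_nonneg_left h4.1 hy.le
  have h9 : y * (M * (4 * e)) ≤ y * (8 * (c * e) * (1 + x^2)) := mul_le_mul_of_nonneg_left h6 hy.le
  have h10 : 0 ≤ y * ((c * e) * (1 + x^2)) := by positivity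
  rw [abs_le]
  constructor <;> nlinarith

lemma pp_le4 (h : NHyp n a c e) {x : ℝ} (hx : -(1/4) ≤ x * e) :
    pp n a c x ≤ 4 * Real.exp (-x) := by
  have h1 := h.pp_le hx
  have h3 := h.MM_le hx
  have hy := Real.exp_pos (-x)
  nlinarith

lemma pp_nonneg (n : ℕ) (a c x : ℝ) : 0 ≤ pp n a c x :=
  mul_nonneg (Nat.cast_nonneg n) (q0 _)

lemma EE_le (h : NHyp n a c e) {x : ℝ} (hx : -(1/4) ≤ x * e) (hx0 : x ≤ 0) :
    EE c e x ≤ -x/4 + 3 := by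
  have h1 := h.de
  have h2 := h.de0
  have h3 := h.epos
  have h4 := h.c2
  have h5 := h.ce
  have h6 := h.ele
  rw [EE_eq]
  set D := dd c * e
  have e1 : e * x^2 ≤ -x/4 := by nlinarith
  have e2 : -x * (c * e) ≤ -x/32 := by nlinarith
  have e3 : -x * (D * e) ≤ -x * (1/32*1) := by
    apply mul_le_mul_of_nonneg_left _ (by linarith)
    apply mul_le_mul h1 (by linarith) h3.le (by norm_num)
  have e4 : (c * e) * D ≤ 1 * 1 := mul_le_mul (by linarith) (by linarith) h2 (by norm_num)
  have e5 : D^2 * e ≤ 1 * 1 := mul_le_mul (by nlinarith) (by linarith) h3.le (by norm_num)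
  nlinarith

/-- the constant κ -/
noncomputable def kap : ℝ := Real.exp (-3) / 2

lemma kap_pos : 0 < kap := by unfold kap; positivity
lemma kap_le : kap ≤ 1 := by
  unfold kap
  have : Real.exp (-3) ≤ 1 := Real.exp_le_one_iff.2 (by norm_num)
  linarith

lemma pp_ge (h : NHyp n a c e) {x : ℝ} (hx : -(1/4) ≤ x * e) (hx0 : x ≤ 0) :
    kap * Real.exp (-(3/4) * x) ≤ pp n a c x := by
  have h1 := h.le_pp hx
  have h2 := h.EE_le hx hx0
  have hw := h.w_half hx
  have he := h.ele
  have hs : 1 + ss c e x * e ≤ 1 := by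
    have h3 := h.epos
    have h4 := h.c2
    have h5 := h.de0
    have : ss c e x ≤ 0 := by unfold ss; linarith
    nlinarith
  have hM : Real.exp (x/4 - 3) ≤ MM c e x := by
    unfold MM
    rw [le_div_iff₀ (by linarith)]
    have : Real.exp (x/4-3) ≤ Real.exp (-(EE c e x)) := Real.exp_le_exp.2 (by linarith)
    nlinarith [Real.exp_pos (x/4-3)]
  have h3 : kap * Real.exp (-(3/4) * x) = Real.exp (-x) * Real.exp (x/4 - 3) * (1/2) := by
    unfold kap
    rw [div_mul_eq_mul_div, ← Real.exp_add, ← Real.exp_add, show -3 + -(3/4) * x = -x + (x/4-3) by ring]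
    ring
  rw [h3]
  refine le_trans ?_ h1
  have hy := Real.exp_pos (-x)
  have := Real.exp_pos (x/4-3)
  apply mul_le_mul _ (by linarith) (by norm_num)
  · have := h.MM_pos hx; positivity
  · exact mul_le_mul_of_nonneg_left hM hy.le

lemma y_ge {x : ℝ} (hx0 : x ≤ 0) : kap * Real.exp (-(3/4) * x) ≤ Real.exp (-x) := by
  have h1 : Real.exp (-(3/4)*x) ≤ Real.exp (-x) := Real.exp_le_exp.2 (by linarith)
  have := Real.exp_pos (-(3/4)*x)
  nlinarith [kap_le]

/-- polynomial decay constant -/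
noncomputable def KC : ℝ := (Nat.factorial 16 : ℝ) / kap^16

lemma KC_pos : 0 < KC := by
  have := kap_pos
  unfold KC; positivity

lemma exp_decay (x : ℝ) : Real.exp (-(kap * Real.exp (-(3/4) * x))) ≤ KC * Real.exp (12 * x) := by
  have hk := kap_pos
  have hz : 0 < kap * Real.exp (-(3/4) * x) := by positivity
  have h1 := Real.pow_div_factorial_le_exp _ hz.le 16
  rw [Real.exp_neg]
  have h2 : (kap * Real.exp (-(3/4) * x))^16 = kap^16 * Real.exp (-(12*x)) := by
    rw [mul_pow, ← Real.exp_nat_mul]; congr 2; push_cast; ring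
  have h3 : KC * Real.exp (12*x) = ((kap * Real.exp (-(3/4) * x))^16 / (Nat.factorial 16 : ℝ))⁻¹ := by
    rw [h2, Real.exp_neg]; unfold KC
    field_simp
  rw [h3]
  exact inv_anti₀ (by positivity) h1

lemma F_eq (n : ℕ) (u : ℝ) : stdNormalCDF u ^ n = (1 - (1 - stdNormalCDF u))^n := by
  congr 1; ring

lemma F_le (n : ℕ) (a c x : ℝ) :
    stdNormalCDF (bb a c + x / a) ^ n ≤ Real.exp (-(pp n a c x)) := by
  rw [F_eq]; exact poisson_le (q1 _) n

lemma F_ge (h : NHyp n a c e) (x : ℝ) :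
    Real.exp (-(pp n a c x)) * (1 - (pp n a c x)^2 * (1/n)) ≤ stdNormalCDF (bb a c + x / a) ^ n := by
  rw [F_eq]
  have := poisson_ge (q0 (bb a c + x / a)) (q1 _) n
  convert! this using 3
  have := h.npos
  unfold pp
  field_simp

lemma one_add_sq_le (x : ℝ) : 1 + x^2 ≤ 8 * Real.exp (|x|/2) := by
  have := Real.quadratic_le_exp_of_nonneg (x := |x|/2) (by positivity)
  nlinarith [sq_abs x, abs_nonneg x]

lemma diff_le (h : NHyp n a c e) {x m : ℝ} (hx : -(1/4) ≤ x * e) (hm : m ≤ pp n a c x)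
    (hm' : m ≤ Real.exp (-x)) :
    |stdNormalCDF (bb a c + x / a) ^ n - Real.exp (-Real.exp (-x))| ≤
      c * e * ((16 * Real.exp (-x)^2 + 34 * (1 + x^2) * Real.exp (-x)) * Real.exp (-m)) := by
  have h1 := F_le n a c x
  have h2 := h.F_ge x
  have h3 := h.pp_sub hx
  have h4 := h.pp_le4 hx
  have h5 := pp_nonneg n a c x
  have h6 := exp_diff hm hm'
  have h7 := h.ninv
  set p := pp n a c x
  set y := Real.exp (-x)
  have hem := Real.exp_pos (-m)
  have hep : Real.exp (-p) ≤ Real.exp (-m) := Real.exp_le_exp.2 (by linarith)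
  have h8 : |stdNormalCDF (bb a c + x / a) ^ n - Real.exp (-p)| ≤ c * e * (16 * y^2) * Real.exp (-m) := by
    rw [abs_of_nonpos (by linarith)]
    have : p^2 * (1/n) ≤ (c * e) * (16 * y^2) := by
      have : p^2 ≤ 16 * y^2 := by nlinarith
      have h0 : (0:ℝ) ≤ 1/n := by positivity
      calc p^2 * (1/n) ≤ (16 * y^2) * (c * e) := mul_le_mul this h7 h0 (by positivity)
        _ = _ := by ring
    have h0 : 0 ≤ p^2 * (1/(n:ℝ)) := by positivity
    calc _ ≤ (p^2 * (1/n)) * Real.exp (-p) := by linarith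
      _ ≤ _ := mul_le_mul this hep (Real.exp_pos _).le (h0.trans this)
  have h9 : |p - y| * Real.exp (-m) ≤ 34 * (c * e) * (1 + x^2) * y * Real.exp (-m) :=
    mul_le_mul_of_nonneg_right h3 hem.le
  have h10 := abs_sub_le (stdNormalCDF (bb a c + x / a) ^ n) (Real.exp (-p)) (Real.exp (-y))
  linarith

lemma dom1 (h : NHyp n a c e) {x : ℝ} (hx : -(1/4) ≤ x * e) :
    |stdNormalCDF (bb a c + x / a) ^ n - Real.exp (-Real.exp (-x))| ≤
      c * e * ((400 + 400 * KC) * Real.exp (-|x|/2)) := by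
  have hce : 0 ≤ c * e := by have := h.c2; have := h.epos; positivity
  have hq := one_add_sq_le x
  have hK := KC_pos
  have hy := Real.exp_pos (-x)
  have h2 : Real.exp (-x)^2 = Real.exp (-(2*x)) := by rw [← Real.exp_nat_mul]; congr 1; push_cast; ring
  rcases le_total 0 x with h0 | h0
  · refine (h.diff_le hx (pp_nonneg _ _ _ _) hy.le).trans (mul_le_mul_of_nonneg_left ?_ hce)
    rw [abs_of_nonneg h0] at *
    simp only [neg_zero, Real.exp_zero, mul_one]
    have h1 : Real.exp (-x) ≤ 1 := Real.exp_le_one_iff.2 (by linarith)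
    have h3 : Real.exp (-x)^2 ≤ (1 + x^2) * Real.exp (-x) := by nlinarith [sq_nonneg x, mul_nonneg (sq_nonneg x) hy.le]
    have h4 : (1 + x^2) * Real.exp (-x) ≤ 8 * Real.exp (x/2) * Real.exp (-x) :=
      mul_le_mul_of_nonneg_right hq hy.le
    rw [mul_assoc 8, ← Real.exp_add, show x/2 + -x = -x/2 by ring] at h4
    have : 0 ≤ KC * Real.exp (-x/2) := by positivity
    nlinarith
  · refine (h.diff_le hx (h.pp_ge hx h0) (y_ge h0)).trans (mul_le_mul_of_nonneg_left ?_ hce)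
    rw [abs_of_nonpos h0] at *
    have h1 := exp_decay x
    have h3 : 16 * Real.exp (-x)^2 + 34 * (1 + x^2) * Real.exp (-x) ≤ 400 * Real.exp (-(5/2)*x) := by
      have e1 : Real.exp (-x) ≤ Real.exp (-(2*x)) := Real.exp_le_exp.2 (by linarith)
      have e2 : (1+x^2) * Real.exp (-x) ≤ (8 * Real.exp (-x/2)) * Real.exp (-(2*x)) :=
        mul_le_mul hq e1 hy.le (by positivity)
      rw [mul_assoc 8, ← Real.exp_add, show -x/2 + -(2*x) = -(5/2)*x by ring] at e2
      have e3 : Real.exp (-(2*x)) ≤ Real.exp (-(5/2)*x) := Real.exp_le_exp.2 (by linarith)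
      rw [h2]
      have := Real.exp_pos (-(5/2)*x)
      nlinarith
    calc _ ≤ (400 * Real.exp (-(5/2)*x)) * (KC * Real.exp (12*x)) :=
          mul_le_mul h3 h1 (Real.exp_pos _).le (by positivity)
      _ = 400 * KC * Real.exp ((19/2) * x) := by
          rw [show (19/2)*x = -(5/2)*x + 12*x by ring, Real.exp_add]; ring
      _ ≤ 400 * KC * Real.exp (- -x/2) := by
          apply mul_le_mul_of_nonneg_left _ (by positivity)
          exact Real.exp_le_exp.2 (by linarith)
      _ ≤ _ := by
          apply mul_le_mul_of_nonneg_right _ (Real.exp_pos _).le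
          linarith

lemma bb_le (h : NHyp n a c e) : bb a c ≤ a := by
  have := h.ha
  have := h.c2
  have h1 : 0 ≤ c / a := by positivity
  have h2 : 0 ≤ (c^2 - 2*c) / (2*a^3) := div_nonneg (by nlinarith) (by positivity)
  unfold bb; linarith

lemma dom2F (h : NHyp n a c e) {x : ℝ} (hx : x * e < -(1/4)) :
    stdNormalCDF (bb a c + x / a) ^ n ≤ (1 + KC) * Real.exp ((3/2) * x) := by
  have ha := h.ha
  have hae := h.ae
  have he := h.epos
  have ha64 := h.a64
  have hK := KC_pos
  have hx' : x < -(a^2/4) := by nlinarith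
  rcases le_total (-(2*a^2)) x with h1 | h1
  · have hx0 : -(1/4) ≤ (-(a^2/4)) * e := by nlinarith
    have h2 : stdNormalCDF (bb a c + x / a) ^ n ≤ stdNormalCDF (bb a c + (-(a^2/4)) / a) ^ n := by
      apply pow_le_pow_left₀ (cdf_nonneg' _)
      apply cdf_mono
      gcongr
    have h3 := F_le n a c (-(a^2/4))
    have h4 := h.pp_ge hx0 (by nlinarith)
    have h5 := exp_decay (-(a^2/4))
    have h6 : Real.exp (-(pp n a c (-(a^2/4)))) ≤ Real.exp (-(kap * Real.exp (-(3/4) * (-(a^2/4))))) :=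
      Real.exp_le_exp.2 (by linarith)
    have h7 : Real.exp (12 * (-(a^2/4))) ≤ Real.exp ((3/2)*x) := Real.exp_le_exp.2 (by linarith)
    have h8 := Real.exp_pos ((3/2)*x)
    nlinarith
  · set u := bb a c + x / a with hu
    have h2 : u ≤ x / (2 * a) := by
      have := h.bb_le
      have : a ≤ -(x / (2*a)) := by
        rw [← neg_div, le_div_iff₀ (by positivity)]; nlinarith
      have : x / a = x/(2*a) + x / (2*a) := by field_simp; ring
      linarith
    have h3 : x / (2*a) ≤ -a := by
      rw [div_le_iff₀ (by positivity)]; nlinarith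
    have ha1 : 1 ≤ a := by nlinarith
    have h4 : stdNormalCDF u ≤ Real.exp (x/4) := by
      have e1 := mills_upper (u := -u) (by linarith)
      have e2 := cdf_neg (-u)
      rw [neg_neg] at e2
      rw [← e2] at e1
      have e3 : stdNormalPDF (-u) / (-u) ≤ stdNormalPDF (-u) :=
        div_le_self (pdf_pos _).le (by linarith)
      have e4 : stdNormalPDF (-u) ≤ Real.exp (-(-u)^2/2) := by
        unfold stdNormalPDF
        apply div_le_self (Real.exp_pos _).le
        rw [Real.one_le_sqrt]; nlinarith [Real.pi_gt_three]
      have e5 : Real.exp (-(-u)^2/2) ≤ Real.exp (x/4) := by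
        apply Real.exp_le_exp.2
        have e6 : (x/(2*a))^2 ≤ u^2 := by nlinarith
        have e7 : -x/2 ≤ (x/(2*a))^2 := by
          rw [div_pow, le_div_iff₀ (by positivity)]
          nlinarith
        nlinarith
      linarith
    have h5 : (32:ℝ) ≤ n := by have := h.nge; linarith
    calc stdNormalCDF u ^ n ≤ (Real.exp (x/4))^n := pow_le_pow_left₀ (cdf_nonneg' _) h4 n
      _ = Real.exp (n * (x/4)) := by rw [← Real.exp_nat_mul]
      _ ≤ Real.exp ((3/2) * x) := by
          apply Real.exp_le_exp.2
          nlinarith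
      _ ≤ _ := by nlinarith [Real.exp_pos ((3/2)*x)]

lemma dom2 (h : NHyp n a c e) {x : ℝ} (hx : x * e < -(1/4)) :
    |stdNormalCDF (bb a c + x / a) ^ n - Real.exp (-Real.exp (-x))| ≤
      c * e * ((400 + 400 * KC) * Real.exp (-|x|/2)) := by
  have he := h.epos
  have hK := KC_pos
  have hc := h.c2
  have hx0 : x < 0 := by nlinarith
  have h1 := h.dom2F hx
  have h2 : Real.exp (-Real.exp (-x)) ≤ KC * Real.exp ((3/2) * x) := by
    have e1 := exp_decay x
    have e2 := y_ge hx0.le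
    have e3 : Real.exp (-Real.exp (-x)) ≤ Real.exp (-(kap * Real.exp (-(3/4) * x))) :=
      Real.exp_le_exp.2 (by linarith)
    have e4 : Real.exp (12*x) ≤ Real.exp ((3/2)*x) := Real.exp_le_exp.2 (by linarith)
    nlinarith
  have h3 : 0 ≤ stdNormalCDF (bb a c + x / a) ^ n := pow_nonneg (cdf_nonneg' _) n
  have h4 := Real.exp_pos (-Real.exp (-x))
  have h5 : |stdNormalCDF (bb a c + x / a) ^ n - Real.exp (-Real.exp (-x))| ≤
      (1 + 2 * KC) * Real.exp ((3/2)*x) := by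
    rw [abs_le]; constructor <;> nlinarith
  refine h5.trans ?_
  rw [abs_of_neg hx0, show - -x/2 = x/2 by ring]
  have h6 : Real.exp ((3/2)*x) ≤ c * e * Real.exp (x/2) := by
    have e1 : Real.exp ((3/2)*x) = Real.exp x * Real.exp (x/2) := by
      rw [← Real.exp_add]; congr 1; ring
    rw [e1]
    apply mul_le_mul_of_nonneg_right _ (Real.exp_pos _).le
    have e2 := Real.quadratic_le_exp_of_nonneg (x := -x) (by linarith)
    have e3 : 2 * (-x) ≤ Real.exp (-x) := by nlinarith [sq_nonneg (x+1)]
    have e4 : Real.exp x * Real.exp (-x) = 1 := by rw [← Real.exp_add]; simp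
    have e5 := Real.exp_pos x
    have e6 : Real.exp x * (2 * (-x)) ≤ 1 := by nlinarith
    have e7 : 1/2 ≤ (c * e) * (-x) := by nlinarith
    by_contra hcon
    push Not at hcon
    nlinarith
  calc (1 + 2 * KC) * Real.exp ((3/2)*x) ≤ (1 + 2*KC) * (c * e * Real.exp (x/2)) := by
        apply mul_le_mul_of_nonneg_left h6 (by positivity)
    _ = c * e * ((1 + 2*KC) * Real.exp (x/2)) := by ring
    _ ≤ _ := by
        apply mul_le_mul_of_nonneg_left _ (by positivity)
        apply mul_le_mul_of_nonneg_right _ (Real.exp_pos _).le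
        linarith

lemma dom (h : NHyp n a c e) (x : ℝ) :
    |stdNormalCDF (bb a c + x / a) ^ n - Real.exp (-Real.exp (-x))| ≤
      c * e * ((400 + 400 * KC) * Real.exp (-|x|/2)) := by
  rcases le_or_gt (-(1/4)) (x * e) with hx | hx
  · exact h.dom1 hx
  · exact h.dom2 hx

end NHyp

lemma deriv_lim {f : ℝ → ℝ} {f' x₀ v : ℝ} (hf : HasDerivAt f f' x₀) {k z : ℕ → ℝ}
    (hk : Tendsto k atTop atTop) (hz : Tendsto (fun n => k n * (z n - x₀)) atTop (nhds v)) :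
    Tendsto (fun n => k n * (f (z n) - f x₀)) atTop (nhds (f' * v)) := by
  have hd : Tendsto (fun n => z n - x₀) atTop (nhds 0) := by
    have h1 := (tendsto_inv_atTop_zero.comp hk).mul hz
    simp only [zero_mul] at h1
    refine h1.congr' ?_
    filter_upwards [hk.eventually_gt_atTop 0] with n hn
    simp only [Function.comp]
    field_simp
  have h := (hasFDerivWithinAt_univ.2 hf.hasFDerivAt).lim hd (Eventually.of_forall fun _ => Set.mem_univ _)
    (by simpa [smul_eq_mul] using hz)
  simp only [smul_eq_mul, add_sub_cancel] at h
  convert! h using 2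
  simp [mul_comm]

/-- `ε_n = 1 / a_n²` -/
noncomputable def eSeq (n : ℕ) : ℝ := 1 / (aSeq n)^2

lemma log_tendsto : Tendsto (fun n : ℕ => Real.log n) atTop atTop :=
  Real.tendsto_log_atTop.comp tendsto_natCast_atTop_atTop

lemma z_tendsto : Tendsto (fun n : ℕ => 4 * Real.pi * Real.log n) atTop atTop :=
  log_tendsto.const_mul_atTop (by positivity)

lemma cSeq_eq {n : ℕ} (hn : 0 < Real.log n) : cSeq n = Real.log (4 * Real.pi * Real.log n) / 2 := by
  unfold cSeq
  rw [Real.log_sqrt (by positivity)]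

lemma eSeq_eq {n : ℕ} (hn : 0 < Real.log n) : eSeq n = 2 * Real.pi / (4 * Real.pi * Real.log n) := by
  unfold eSeq aSeq
  rw [Real.sq_sqrt (by positivity)]
  have := Real.pi_pos
  field_simp
  norm_num

lemma c_tendsto : Tendsto cSeq atTop atTop := by
  have h := (Real.tendsto_log_atTop.comp z_tendsto).atTop_div_const (by norm_num : (0:ℝ) < 2)
  refine h.congr' ?_
  filter_upwards [log_tendsto.eventually_gt_atTop 0] with n hn
  rw [cSeq_eq hn]; rfl

lemma c2e_tendsto : Tendsto (fun n => (cSeq n)^2 * eSeq n) atTop (nhds 0) := by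
  have h1 := ((Real.isLittleO_pow_log_id_atTop (n := 2)).tendsto_div_nhds_zero.comp z_tendsto).const_mul
    (Real.pi / 2)
  rw [mul_zero] at h1
  refine h1.congr' ?_
  filter_upwards [log_tendsto.eventually_gt_atTop 0] with n hn
  rw [cSeq_eq hn, eSeq_eq hn]
  simp only [Function.comp, id]
  ring

lemma ce_tendsto : Tendsto (fun n => cSeq n * eSeq n) atTop (nhds 0) := by
  have h := c2e_tendsto.mul (tendsto_inv_atTop_zero.comp c_tendsto)
  rw [zero_mul] at h
  refine h.congr' ?_
  filter_upwards [c_tendsto.eventually_gt_atTop 0] with n hn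
  simp only [Function.comp]
  field_simp

lemma hyp_ev : ∀ᶠ n : ℕ in atTop, NHyp n (aSeq n) (cSeq n) (eSeq n) := by
  filter_upwards [log_tendsto.eventually_gt_atTop 0, c_tendsto.eventually_ge_atTop 2,
    c2e_tendsto.eventually_le_const (by norm_num : (0:ℝ) < 1/16), eventually_gt_atTop 0]
    with n hL hc hce hn
  have ha : 0 < aSeq n := by unfold aSeq; positivity
  refine ⟨ha, ?_, ?_, hc, rfl, hce⟩
  · unfold aSeq
    rw [Real.sq_sqrt (by positivity), mul_div_cancel_left₀ _ (by norm_num), Real.exp_log (by exact_mod_cast hn)]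
  · unfold cSeq aSeq
    rw [Real.exp_log (by positivity), ← Real.sqrt_mul (by positivity)]
    congr 1; ring

lemma de_tendsto : Tendsto (fun n => dd (cSeq n) * eSeq n) atTop (nhds 0) := by
  have h := (c2e_tendsto.sub (ce_tendsto.const_mul 2)).div_const 2
  simp only [mul_zero, sub_zero, zero_div] at h
  refine h.congr fun n => ?_
  unfold dd; ring

/-- scaling `k_n = 1/(c_n ε_n)` -/
noncomputable def kSeq (n : ℕ) : ℝ := (cSeq n * eSeq n)⁻¹

lemma k_tendsto : Tendsto kSeq atTop atTop := by
  refine Tendsto.inv_tendsto_nhdsGT_zero (tendsto_nhdsWithin_iff.2 ⟨ce_tendsto, ?_⟩)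
  filter_upwards [hyp_ev] with n h
  have := h.epos
  have := h.c2
  exact mul_pos (by linarith) h.epos

lemma cinv_tendsto : Tendsto (fun n => (cSeq n)⁻¹) atTop (nhds 0) :=
  tendsto_inv_atTop_zero.comp c_tendsto

lemma kE_tendsto (x : ℝ) : Tendsto (fun n => kSeq n * EE (cSeq n) (eSeq n) x) atTop
    (nhds (1 - x)) := by
  have h1 := cinv_tendsto
  have h2 := de_tendsto
  have h := ((((h1.const_mul (x^2/2)).sub_const x).add_const 1).sub
    (((h1.const_mul x).sub_const 1).mul h2)).add (((h2.pow 2).div_const 2).mul h1)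
  have e : x^2/2*0 - x + 1 - (x*0-1)*0 + (0:ℝ)^2/2*0 = 1 - x := by ring
  rw [e] at h
  refine h.congr' ?_
  filter_upwards [hyp_ev] with n hn
  have := hn.epos
  have hc : 0 < cSeq n := by linarith [hn.c2]
  rw [NHyp.EE_eq]
  unfold kSeq
  field_simp

lemma ks_tendsto (x : ℝ) : Tendsto (fun n => kSeq n * (ss (cSeq n) (eSeq n) x * eSeq n)) atTop
    (nhds (-1)) := by
  have h1 := cinv_tendsto
  have h2 := de_tendsto
  have h := ((h1.const_mul x).sub_const 1).sub (h2.mul h1)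
  have e : x*0-1-0*0 = (-1:ℝ) := by ring
  rw [e] at h
  refine h.congr' ?_
  filter_upwards [hyp_ev] with n hn
  have := hn.epos
  have hc : 0 < cSeq n := by linarith [hn.c2]
  unfold kSeq ss
  field_simp

lemma kinv_mul {f : ℕ → ℝ} {v : ℝ} (h : Tendsto (fun n => kSeq n * f n) atTop (nhds v)) :
    Tendsto f atTop (nhds 0) := by
  have h1 := (tendsto_inv_atTop_zero.comp k_tendsto).mul h
  simp only [zero_mul] at h1
  refine h1.congr' ?_
  filter_upwards [k_tendsto.eventually_gt_atTop 0] with n hn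
  simp only [Function.comp]
  field_simp

lemma kM_tendsto (x : ℝ) : Tendsto (fun n => kSeq n * (MM (cSeq n) (eSeq n) x - 1)) atTop
    (nhds x) := by
  have h1 : Tendsto (fun n => kSeq n * (Real.exp (-(EE (cSeq n) (eSeq n) x)) - Real.exp (-0))) atTop
      (nhds (-1 * (1 - x))) := by
    refine deriv_lim (f := fun t => Real.exp (-t)) ?_ k_tendsto (by simpa using kE_tendsto x)
    exact ((hasDerivAt_neg (0:ℝ)).exp).congr_deriv (by simp)
  have h2 := ks_tendsto x
  have h3 := kinv_mul h2
  have h := (h1.sub h2).div (h3.const_add 1) (by norm_num)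
  have e : (-1 * (1 - x) - -1) / (1 + 0) = x := by ring
  rw [e] at h
  refine h.congr' ?_
  filter_upwards [h3.eventually_const_le (by norm_num : (-(1/2):ℝ) < 0)] with n hn
  have : 1 + ss (cSeq n) (eSeq n) x * eSeq n ≠ 0 := by linarith
  unfold MM
  simp only [Pi.div_apply, neg_zero, Real.exp_zero]
  field_simp
  ring

lemma hx_ev (x : ℝ) : ∀ᶠ n : ℕ in atTop, -(1/4) ≤ x * eSeq n := by
  have h : Tendsto (fun n => x * eSeq n) atTop (nhds 0) := by
    have h := ((ce_tendsto.mul cinv_tendsto).const_mul x)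
    simp only [mul_zero] at h
    refine h.congr' ?_
    filter_upwards [c_tendsto.eventually_gt_atTop 0] with n hn
    field_simp
  exact h.eventually_const_le (by norm_num)

lemma kR_tendsto (x : ℝ) : Tendsto (fun n => kSeq n *
    (pp n (aSeq n) (cSeq n) x * Real.exp x - 1)) atTop (nhds x) := by
  have h1 := kM_tendsto x
  have hM : Tendsto (fun n => MM (cSeq n) (eSeq n) x) atTop (nhds 1) := by
    simpa using (kinv_mul h1).add_const 1
  have h2 := h1.sub ((hM.mul cinv_tendsto).const_mul 4)
  simp only [mul_zero, sub_zero] at h2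
  have hyx : Real.exp (-x) * Real.exp x = 1 := by rw [← Real.exp_add]; simp
  have hx0 := Real.exp_pos x
  refine tendsto_of_tendsto_of_tendsto_of_le_of_le' h2 h1 ?_ ?_
  · filter_upwards [hyp_ev, hx_ev x, k_tendsto.eventually_gt_atTop 0] with n hn hx hk
    have h3 := mul_le_mul_of_nonneg_right (hn.le_pp hx) hx0.le
    have he := hn.epos
    have hc : 0 < cSeq n := by linarith [hn.c2]
    have e : Real.exp (-x) * MM (cSeq n) (eSeq n) x * (1 - 4 * eSeq n) * Real.exp x =
        MM (cSeq n) (eSeq n) x * (1 - 4 * eSeq n) := by linear_combination (MM (cSeq n) (eSeq n) x * (1 - 4 * eSeq n)) * hyx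
    rw [e] at h3
    calc _ = kSeq n * (MM (cSeq n) (eSeq n) x * (1 - 4 * eSeq n) - 1) := by
          unfold kSeq; field_simp; ring
      _ ≤ _ := by apply mul_le_mul_of_nonneg_left _ hk.le; linarith
  · filter_upwards [hyp_ev, hx_ev x, k_tendsto.eventually_gt_atTop 0] with n hn hx hk
    have h3 := mul_le_mul_of_nonneg_right (hn.pp_le hx) hx0.le
    have e : Real.exp (-x) * MM (cSeq n) (eSeq n) x * Real.exp x =
        MM (cSeq n) (eSeq n) x := by linear_combination (MM (cSeq n) (eSeq n) x) * hyx
    rw [e] at h3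
    apply mul_le_mul_of_nonneg_left _ hk.le; linarith

lemma kP_tendsto (x : ℝ) : Tendsto (fun n => kSeq n *
    (Real.exp (-(pp n (aSeq n) (cSeq n) x)) - Real.exp (-Real.exp (-x)))) atTop
    (nhds (-(Real.exp (-x) * Real.exp (-Real.exp (-x))) * x)) := by
  have hd : HasDerivAt (fun r : ℝ => Real.exp (-(Real.exp (-x) * r)))
      (-(Real.exp (-x) * Real.exp (-Real.exp (-x)))) 1 := by
    have := (((hasDerivAt_id (1:ℝ)).const_mul (Real.exp (-x))).neg).exp
    refine this.congr_deriv ?_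
    simp; ring
  have h := deriv_lim hd k_tendsto (kR_tendsto x)
  refine h.congr fun n => ?_
  have hyx : Real.exp (-x) * Real.exp x = 1 := by rw [← Real.exp_add]; simp
  simp only [mul_one]
  congr 4
  linear_combination (pp n (aSeq n) (cSeq n) x) * hyx

lemma kF_tendsto (x : ℝ) : Tendsto (fun n => kSeq n *
    (stdNormalCDF (bSeq3 n + x / aSeq n) ^ n - Real.exp (-(pp n (aSeq n) (cSeq n) x)))) atTop
    (nhds 0) := by
  have h0 : Tendsto (fun n => (32 * Real.exp (-x)^2) * (cSeq n)⁻¹) atTop (nhds 0) := by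
    simpa using cinv_tendsto.const_mul (32 * Real.exp (-x)^2)
  refine squeeze_zero_norm' ?_ h0
  filter_upwards [hyp_ev, hx_ev x, k_tendsto.eventually_gt_atTop 0] with n hn hx hk
  have h1 := NHyp.F_le n (aSeq n) (cSeq n) x
  have h2 := hn.F_ge x
  have h3 := hn.pp_le4 hx
  have h4 := NHyp.pp_nonneg n (aSeq n) (cSeq n) x
  change stdNormalCDF (bSeq3 n + x / aSeq n) ^ n ≤ _ at h1
  change _ ≤ stdNormalCDF (bSeq3 n + x / aSeq n) ^ n at h2
  set p := pp n (aSeq n) (cSeq n) x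
  set F := stdNormalCDF (bSeq3 n + x / aSeq n) ^ n
  have hep : Real.exp (-p) ≤ 1 := Real.exp_le_one_iff.2 (by linarith)
  have hep0 := Real.exp_pos (-p)
  have hnp := hn.npos
  have he := hn.epos
  have hc : 0 < cSeq n := by linarith [hn.c2]
  rw [norm_mul, Real.norm_of_nonneg hk.le, Real.norm_eq_abs, abs_of_nonpos (by linarith)]
  have h5 : -(F - Real.exp (-p)) ≤ (16 * Real.exp (-x)^2) * (1/n) := by
    have e1 : p^2 ≤ 16 * Real.exp (-x)^2 := by nlinarith
    have e2 : p^2 * (1/(n:ℝ)) ≤ (16 * Real.exp (-x)^2) * (1/n) :=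
      mul_le_mul_of_nonneg_right e1 (by positivity)
    have e3 : 0 ≤ p^2 * (1/(n:ℝ)) := by positivity
    nlinarith
  have h6 : kSeq n * (1/n) ≤ 2 * (cSeq n)⁻¹ := by
    have e1 := hn.nge
    have e2 := hn.ae
    have e3 : 1 ≤ 2 * (eSeq n * n) := by nlinarith
    unfold kSeq
    rw [mul_inv, mul_assoc, mul_comm 2]
    apply mul_le_mul_of_nonneg_left _ (by positivity)
    rw [← one_div, div_mul_div_comm, div_le_iff₀ (by positivity)]
    linarith
  calc _ ≤ kSeq n * ((16 * Real.exp (-x)^2) * (1/n)) := mul_le_mul_of_nonneg_left h5 hk.le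
    _ = (16 * Real.exp (-x)^2) * (kSeq n * (1/n)) := by ring
    _ ≤ (16 * Real.exp (-x)^2) * (2 * (cSeq n)⁻¹) := mul_le_mul_of_nonneg_left h6 (by positivity)
    _ = _ := by ring

lemma pointwise (x : ℝ) : Tendsto (fun n => kSeq n *
    |stdNormalCDF (bSeq3 n + x / aSeq n) ^ n - Real.exp (-Real.exp (-x))|) atTop
    (nhds (|x| * (Real.exp (-x) * Real.exp (-Real.exp (-x))))) := by
  have h := ((kF_tendsto x).add (kP_tendsto x)).abs
  have e : |0 + -(Real.exp (-x) * Real.exp (-Real.exp (-x))) * x| =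
      |x| * (Real.exp (-x) * Real.exp (-Real.exp (-x))) := by
    rw [zero_add, abs_mul, abs_neg, abs_of_pos (by positivity), mul_comm]
  rw [e] at h
  refine h.congr' ?_
  filter_upwards [k_tendsto.eventually_gt_atTop 0] with n hk
  rw [← mul_add, abs_mul, abs_of_pos hk]
  congr 2
  ring

lemma integral_lim : Tendsto (fun n => ∫ x : ℝ, kSeq n *
    |stdNormalCDF (bSeq3 n + x / aSeq n) ^ n - Real.exp (-Real.exp (-x))|) atTop
    (nhds (Real.eulerMascheroniConstant - 2 * EiNegOne)) := by
  rw [← gumbel_integral]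
  refine tendsto_integral_filter_of_dominated_convergence
    (fun x => (400 + 400 * NHyp.KC) * Real.exp (-|x|/2)) ?_ ?_
    (exp_abs_integrable.const_mul _) (Eventually.of_forall pointwise)
  · refine Eventually.of_forall fun n => Continuous.aestronglyMeasurable ?_
    have := cdf_cont
    fun_prop
  · filter_upwards [hyp_ev, k_tendsto.eventually_gt_atTop 0] with n hn hk
    refine Eventually.of_forall fun x => ?_
    have h := hn.dom x
    have hb : bb (aSeq n) (cSeq n) = bSeq3 n := rfl
    rw [hb] at h
    rw [norm_mul, Real.norm_of_nonneg hk.le, Real.norm_eq_abs, abs_abs]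
    have he := hn.epos
    have hc : 0 < cSeq n := by linarith [hn.c2]
    calc _ ≤ kSeq n * _ := mul_le_mul_of_nonneg_left h hk.le
      _ = _ := by unfold kSeq; field_simp

lemma ratio_tendsto : Tendsto (fun n : ℕ => 2 * cSeq n / Real.log (Real.log n)) atTop (nhds 1) := by
  have hl := Real.tendsto_log_atTop.comp log_tendsto
  have h := ((tendsto_inv_atTop_zero.comp hl).const_mul (Real.log (4 * Real.pi))).add_const 1
  simp only [mul_zero, zero_add] at h
  refine h.congr' ?_
  filter_upwards [log_tendsto.eventually_gt_atTop 0, hl.eventually_gt_atTop 0] with n hn hln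
  rw [cSeq_eq hn, Real.log_mul (by positivity) hn.ne']
  simp only [Function.comp] at *
  field_simp

/-- With the refined centering, `Y_n = a_n(X_{(n)} - b_n)` satisfies
`W₁(L(Y_n), Λ) = ((γ - 2 Ei(-1)) log log n/(4 log n)) (1 + o(1))`. -/
theorem refined_w1 :
    Tendsto (fun n : ℕ =>
        (∫ x : ℝ, |stdNormalCDF (bSeq3 n + x / aSeq n) ^ n - Real.exp (-Real.exp (-x))|) /
          ((Real.eulerMascheroniConstant - 2 * EiNegOne) *
            Real.log (Real.log n) / (4 * Real.log n)))
      atTop (nhds 1) := by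
  have h := (integral_lim.div_const (Real.eulerMascheroniConstant - 2 * EiNegOne)).mul ratio_tendsto
  have hC := const_pos
  rw [div_self hC.ne', mul_one] at h
  refine h.congr' ?_
  have hl := Real.tendsto_log_atTop.comp log_tendsto
  filter_upwards [hyp_ev, log_tendsto.eventually_gt_atTop 0, hl.eventually_gt_atTop 0]
    with n hn hL hLL
  simp only [Function.comp] at hLL
  have hc : 0 < cSeq n := by linarith [hn.c2]
  have hk : kSeq n = 2 * Real.log n / cSeq n := by
    unfold kSeq eSeq aSeq
    rw [Real.sq_sqrt (by positivity)]
    field_simp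
  rw [integral_const_mul, hk]
  field_simp
  ring
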